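/- If f ∈ H_α and y ∈ ℝ^M satisfies |y_m − f(x⁽ᵐ⁾)| ≤ ε_m for all m, then max_{1≤m≤M}(y_m − ε_m) ≤ max[f] ≤ max_{1≤m≤M} y_m + max_{x∈X} u_{0,ε}(x), where max[f] = max_{x∈X} f(x) and u_{0,ε}(x) = min_{1≤m≤M}(ε_m + dist(x,x⁽ᵐ⁾)^α). -/

import Mathlib

/-- If `f ∈ H_α` and `|y_m - f(x⁽ᵐ⁾)| ≤ ε_m` for all `m`, then
`max_m (y_m - ε_m) ≤ max[f] ≤ max_m y_m + max_x u_{0,ε}(x)`. -/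
theorem stmt12 {X : Type*} [MetricSpace X] [CompactSpace X] [Nonempty X]
    (α : ℝ) (hα : 0 < α) (hα1 : α ≤ 1)
    (M : ℕ) (hM : 0 < M) (xs : Fin M → X) (ε : Fin M → ℝ) (hε : ∀ m, 0 ≤ ε m)
    (f : X → ℝ) (hf : ∀ x x' : X, |f x - f x'| ≤ dist x x' ^ α)
    (y : Fin M → ℝ) (hy : ∀ m, |y m - f (xs m)| ≤ ε m) :
    (⨆ m : Fin M, (y m - ε m)) ≤ (⨆ x : X, f x) ∧
      (⨆ x : X, f x) ≤ (⨆ m : Fin M, y m) +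
        ⨆ x : X, ⨅ m : Fin M, (ε m + dist x (xs m) ^ α) := by
  have : Nonempty (Fin M) := ⟨⟨0, hM⟩⟩
  have hD : ∀ x x' : X, dist x x' ^ α ≤ Metric.diam (Set.univ : Set X) ^ α := fun x x' =>
    Real.rpow_le_rpow dist_nonneg
      (Metric.dist_le_diam_of_mem isCompact_univ.isBounded (Set.mem_univ _) (Set.mem_univ _)) hα.le
  have hbf : BddAbove (Set.range f) := by
    obtain ⟨x0⟩ := ‹Nonempty X›
    refine ⟨f x0 + Metric.diam (Set.univ : Set X) ^ α, ?_⟩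
    rintro _ ⟨x, rfl⟩
    have h1 := (abs_le.1 (hf x x0)).2
    have h2 := hD x x0
    linarith
  have hbi : ∀ x : X, BddBelow (Set.range fun m : Fin M => ε m + dist x (xs m) ^ α) :=
    fun x => (Set.finite_range _).bddBelow
  have hbu : BddAbove (Set.range fun x : X => ⨅ m : Fin M, (ε m + dist x (xs m) ^ α)) := by
    refine ⟨ε ⟨0, hM⟩ + Metric.diam (Set.univ : Set X) ^ α, ?_⟩
    rintro _ ⟨x, rfl⟩
    have h1 := ciInf_le (hbi x) ⟨0, hM⟩
    have h2 := hD x (xs ⟨0, hM⟩)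
    dsimp only at h1 ⊢
    linarith
  constructor
  · refine ciSup_le fun m => ?_
    have h1 := (abs_le.1 (hy m)).2
    have h2 := le_ciSup hbf (xs m)
    linarith
  · refine ciSup_le fun x => ?_
    have h1 := le_ciSup hbu x
    have h2 : f x - (⨆ m : Fin M, y m) ≤ ⨅ m : Fin M, (ε m + dist x (xs m) ^ α) := by
      refine le_ciInf fun m => ?_
      have h3 := (abs_le.1 (hy m)).1
      have h4 := (abs_le.1 (hf x (xs m))).2
      have h5 := le_ciSup (Set.finite_range y).bddAbove m
      linarith
    linarith
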